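/- Let p be a complex polynomial, Ω ⊆ D(ζ₀, r) open and bounded, ζ₀ ≠ 0 a non-isolated boundary point of Ω, Γ = ∂Ω ∩ D(ζ₀, r), and S holomorphic on Ω, continuous and bounded on Ω ∪ Γ, with S(ζ) = conj(ζ)·p(ζ) for all ζ ∈ Γ. Define f(z) = S(z)/p(z) for z ∈ (Ω ∪ Γ) \ {ζ₀} and f(ζ₀) = conj(ζ₀). Then for sufficiently small r' > 0, f is a Schwarz function of Ω ∪ Γ on D(ζ₀, r'), i.e., f is holomorphic on Ω ∩ D(ζ₀, r'), continuous on (Ω ∪ Γ) ∩ D(ζ₀, r'), and f(ζ) = conj(ζ) for all ζ ∈ Γ ∩ D(ζ₀, r'). -/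

import Mathlib

open Complex Metric Set

local notation "conj'" => starRingEnd ℂ

/-- `b` is twice the `dbar`-derivative of `f` at `t`. -/
def HasDb (f : ℂ → ℂ) (b : ℂ) (t : ℂ) : Prop :=
  ∃ f' : ℂ →L[ℝ] ℂ, HasFDerivAt f f' t ∧ f' 1 + I * f' I = b

theorem HasDb.mul {f g : ℂ → ℂ} {a b t : ℂ} (hf : HasDb f a t) (hg : HasDb g b t) :
    HasDb (fun z => f z * g z) (a * g t + f t * b) t := by
  obtain ⟨f', hf, rfl⟩ := hf
  obtain ⟨g', hg, rfl⟩ := hg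
  refine ⟨_, hf.mul hg, ?_⟩
  simp
  ring

theorem HasDb.sub {f g : ℂ → ℂ} {a b t : ℂ} (hf : HasDb f a t) (hg : HasDb g b t) :
    HasDb (fun z => f z - g z) (a - b) t := by
  obtain ⟨f', hf, rfl⟩ := hf
  obtain ⟨g', hg, rfl⟩ := hg
  refine ⟨_, hf.sub hg, ?_⟩
  simp
  ring

theorem HasDb.of_hol {f : ℂ → ℂ} {d t : ℂ} (hf : HasDerivAt f d t) : HasDb f 0 t := by
  refine ⟨_, hf.hasFDerivAt.restrictScalars ℝ, ?_⟩
  simp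
  linear_combination d * I_mul_I

theorem HasDb.conj_hol {f : ℂ → ℂ} {d t : ℂ} (hf : HasDerivAt f d t) :
    HasDb (fun z => conj' (f z)) (2 * conj' d) t := by
  refine ⟨_, (conjCLE : ℂ →L[ℝ] ℂ).hasFDerivAt.comp t (hf.hasFDerivAt.restrictScalars ℝ), ?_⟩
  simp
  linear_combination - (conj' d) * I_mul_I

theorem HasDb.real_comp {W : ℂ → ℝ} {h : ℝ → ℝ} {h' : ℝ} {b t : ℂ}
    (hW : HasDb (fun z => (W z : ℂ)) b t) (hh : HasDerivAt h h' (W t)) :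
    HasDb (fun z => ((h (W z) : ℝ) : ℂ)) (h' * b) t := by
  obtain ⟨f', hf, rfl⟩ := hW
  have h1 : HasFDerivAt W (reCLM.comp f') t := reCLM.hasFDerivAt.comp t hf
  have h0 : f' = ofRealCLM.comp (reCLM.comp f') :=
    hf.unique (ofRealCLM.hasFDerivAt.comp t h1)
  refine ⟨_, ofRealCLM.hasFDerivAt.comp t (hh.hasFDerivAt.comp t h1), ?_⟩
  rw [h0]
  simp
  ring

theorem HasDb.congr_of_eventuallyEq {f g : ℂ → ℂ} {b t : ℂ} (hf : HasDb f b t)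
    (h : g =ᶠ[nhds t] f) : HasDb g b t := by
  obtain ⟨f', hf, hb⟩ := hf
  exact ⟨f', hf.congr_of_eventuallyEq h, hb⟩

theorem HasDb.const (c t : ℂ) : HasDb (fun _ => c) 0 t :=
  HasDb.of_hol (hasDerivAt_const t c)

theorem HasDb.eq {f : ℂ → ℂ} {a b t : ℂ} (h : HasDb f a t) (h2 : HasDb f b t) : a = b := by
  obtain ⟨f', hf, rfl⟩ := h
  obtain ⟨g', hg, rfl⟩ := h2
  rw [hf.unique hg]

open MeasureTheory in
theorem HasDb.integral_eq_zero {F b : ℂ → ℂ} (hF : ContDiff ℝ 1 F) (hs : HasCompactSupport F)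
    (hb : ∀ t, HasDb F (b t) t) :
    Continuous b ∧ HasCompactSupport b ∧ Integrable b ∧ ∫ t, b t = 0 := by
  have e : b = fun t => fderiv ℝ F t 1 + I * fderiv ℝ F t I := by
    ext t
    obtain ⟨f', hf, h⟩ := hb t
    rw [hf.fderiv, h]
  have hc : Continuous (fderiv ℝ F) := hF.continuous_fderiv one_ne_zero
  have hs' : HasCompactSupport (fderiv ℝ F) := hs.fderiv ℝ
  have hcv : ∀ v, Continuous (fun t => fderiv ℝ F t v) := fun v => hc.clm_apply continuous_const
  have hsv : ∀ v, HasCompactSupport (fun t => fderiv ℝ F t v) := fun v =>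
    hs'.comp_left (g := fun L : ℂ →L[ℝ] ℂ => L v) (by simp)
  have hiv : ∀ v, Integrable (fun t => fderiv ℝ F t v) := fun v =>
    (hcv v).integrable_of_hasCompactSupport (hsv v)
  have h0 : ∀ v, ∫ t, fderiv ℝ F t v = 0 := by
    intro v
    have := integral_mul_fderiv_eq_neg_fderiv_mul_of_integrable (μ := (volume : Measure ℂ))
      (f := fun _ : ℂ => (1:ℂ)) (g := F) (v := v) (by simp) (by simpa using hiv v)
      (by simpa using hF.continuous.integrable_of_hasCompactSupport hs) (by simp)
      (fun x _ => (hF.differentiable one_ne_zero) x)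
    simpa using this
  subst e
  refine ⟨by fun_prop, ?_, (hiv 1).add ((hiv I).const_mul I), ?_⟩
  · exact (hsv 1).add ((hsv I).mul_left (f := fun _ => I))
  · rw [integral_add (hiv 1) ((hiv I).const_mul I), integral_const_mul, h0, h0]; simp

noncomputable def hcut (x : ℝ) : ℝ := Real.smoothTransition (x - 1)

theorem hcut_contDiff : ContDiff ℝ 1 hcut :=
  Real.smoothTransition.contDiff.comp (contDiff_id.sub contDiff_const)

theorem hcut_zero {x : ℝ} (hx : x ≤ 1) : hcut x = 0 :=
  Real.smoothTransition.zero_of_nonpos (by linarith)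

theorem hcut_one {x : ℝ} (hx : 2 ≤ x) : hcut x = 1 :=
  Real.smoothTransition.one_of_one_le (by linarith)

theorem hcut_nonneg (x : ℝ) : 0 ≤ hcut x := Real.smoothTransition.nonneg _
theorem hcut_le_one (x : ℝ) : hcut x ≤ 1 := Real.smoothTransition.le_one _

theorem hcut_mono : Monotone hcut := fun _ _ h => Real.smoothTransition.monotone (by linarith)

theorem hcut_deriv_cont : Continuous (deriv hcut) := hcut_contDiff.continuous_deriv le_rfl

theorem hcut_deriv_zero {x : ℝ} (hx : x ≤ 1) : deriv hcut x = 0 := by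
  have h1 : EqOn (deriv hcut) (fun _ => 0) (Iio 1) := by
    intro y hy
    have : hcut =ᶠ[nhds y] fun _ => 0 := by
      filter_upwards [Iio_mem_nhds hy] with z hz using hcut_zero (le_of_lt hz)
    rw [this.deriv_eq]; simp
  have := h1.closure hcut_deriv_cont continuous_const
  rw [closure_Iio] at this
  exact this hx

theorem hcut_deriv_zero' {x : ℝ} (hx : 2 < x) : deriv hcut x = 0 := by
  have : hcut =ᶠ[nhds x] fun _ => 1 := by
    filter_upwards [Ioi_mem_nhds hx] with z hz using hcut_one (le_of_lt hz)
  rw [this.deriv_eq]; simp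

theorem hcut_deriv_nonneg (x : ℝ) : 0 ≤ deriv hcut x := hcut_mono.deriv_nonneg

theorem hcut_bound : ∃ C : ℝ, ∀ x, 0 ≤ x * deriv hcut x ∧ x * deriv hcut x ≤ C := by
  obtain ⟨C, hC⟩ := (isCompact_Icc (a := (1:ℝ)) (b := 2)).exists_bound_of_continuousOn
    (f := fun x => x * deriv hcut x) (continuous_id.mul hcut_deriv_cont).continuousOn
  have hC0 : 0 ≤ C := (norm_nonneg _).trans (hC 1 (by simp))
  refine ⟨C, fun x => ?_⟩
  rcases le_total x 1 with h | h
  · rw [hcut_deriv_zero h]; simpa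
  · refine ⟨mul_nonneg (by linarith) (hcut_deriv_nonneg x), ?_⟩
    rcases le_or_gt x 2 with h2 | h2
    · exact (le_abs_self _).trans (hC x ⟨h, h2⟩)
    · rw [hcut_deriv_zero' h2]; simpa

structure Setup (ζ₀ : ℂ) (r : ℝ) (p : Polynomial ℂ) (Ω : Set ℂ) (S Φ : ℂ → ℂ) : Prop where
  isOpen : IsOpen Ω
  sub : Ω ⊆ ball ζ₀ r
  hol : DifferentiableOn ℂ S Ω
  on : ∀ z ∈ Ω, Φ z = S z - conj' z * p.eval z
  off : ∀ z, z ∉ Ω → Φ z = 0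
  cont : ContinuousOn Φ (ball ζ₀ r)

namespace Setup
variable {ζ₀ : ℂ} {r : ℝ} {p : Polynomial ℂ} {Ω : Set ℂ} {S Φ : ℂ → ℂ}

theorem ev (H : Setup ζ₀ r p Ω S Φ) {t : ℂ} (ht : t ∈ Ω) :
    Φ =ᶠ[nhds t] fun z => S z - conj' z * p.eval z := by
  filter_upwards [H.isOpen.mem_nhds ht] with z hz using H.on z hz

theorem contDiffAt_S (H : Setup ζ₀ r p Ω S Φ) {t : ℂ} (ht : t ∈ Ω) : ContDiffAt ℝ 1 S t :=
  ((H.hol.analyticAt (H.isOpen.mem_nhds ht)).contDiffAt (n := 1)).restrict_scalars ℝ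

theorem contDiffAt_S' (H : Setup ζ₀ r p Ω S Φ) {t : ℂ} (ht : t ∈ Ω) :
    ContDiffAt ℝ 1 (deriv S) t :=
  ((H.hol.analyticAt (H.isOpen.mem_nhds ht)).deriv.contDiffAt (n := 1)).restrict_scalars ℝ

theorem contDiffAt_Φ (H : Setup ζ₀ r p Ω S Φ) {t : ℂ} (ht : t ∈ Ω) : ContDiffAt ℝ 1 Φ t := by
  refine ContDiffAt.congr_of_eventuallyEq ?_ (H.ev ht)
  refine (H.contDiffAt_S ht).sub (ContDiffAt.mul ?_ ?_)
  · exact (conjCLE : ℂ →L[ℝ] ℂ).contDiff.contDiffAt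
  · exact (p.differentiable.contDiff (n := 1)).contDiffAt.restrict_scalars ℝ

theorem hasDb_Φ (H : Setup ζ₀ r p Ω S Φ) {t : ℂ} (ht : t ∈ Ω) : HasDb Φ (-2 * p.eval t) t := by
  refine HasDb.congr_of_eventuallyEq ?_ (H.ev ht)
  have h1 := (H.hol.differentiableAt (H.isOpen.mem_nhds ht)).hasDerivAt
  have := (HasDb.of_hol h1).sub ((HasDb.conj_hol (hasDerivAt_id t)).mul
    (HasDb.of_hol (p.hasDerivAt t)))
  convert! this using 1
  simp

theorem hasDb_conjΦ (H : Setup ζ₀ r p Ω S Φ) {t : ℂ} (ht : t ∈ Ω) :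
    HasDb (fun z => conj' (Φ z)) (2 * conj' (deriv S t - conj' t * p.derivative.eval t)) t := by
  have e : (fun z => conj' (Φ z)) =ᶠ[nhds t] fun z => conj' (S z) - z * conj' (p.eval z) := by
    filter_upwards [H.ev ht] with z hz
    simp [hz]
  refine HasDb.congr_of_eventuallyEq ?_ e
  have h1 := (H.hol.differentiableAt (H.isOpen.mem_nhds ht)).hasDerivAt
  have := (HasDb.conj_hol h1).sub ((HasDb.of_hol (hasDerivAt_id t)).mul
    (HasDb.conj_hol (p.hasDerivAt t)))
  convert! this using 1
  simp
  ring

/-- twice `dbar |Φ|²` -/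
noncomputable def dV (p : Polynomial ℂ) (S Φ : ℂ → ℂ) (t : ℂ) : ℂ :=
  -2 * p.eval t * conj' (Φ t) + Φ t * (2 * conj' (deriv S t - conj' t * p.derivative.eval t))

theorem hasDb_V (H : Setup ζ₀ r p Ω S Φ) {t : ℂ} (ht : t ∈ Ω) :
    HasDb (fun z => ((normSq (Φ z) : ℝ) : ℂ)) (dV p S Φ t) t := by
  have := (H.hasDb_Φ ht).mul (H.hasDb_conjΦ ht)
  unfold dV
  simpa only [mul_conj] using this

theorem contDiffAt_V (H : Setup ζ₀ r p Ω S Φ) {t : ℂ} (ht : t ∈ Ω) :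
    ContDiffAt ℝ 1 (fun z => normSq (Φ z)) t := by
  simp only [normSq_eq_norm_sq]
  exact (H.contDiffAt_Φ ht).norm_sq ℝ

theorem cut_zero (H : Setup ζ₀ r p Ω S Φ) {η : ℂ → ℂ} (hη : tsupport η ⊆ ball ζ₀ r)
    (G : ℂ → ℂ) {δ : ℝ} (hδ : 0 < δ) {t : ℂ} (ht : t ∉ Ω) :
    (fun z => η z * G z * ((hcut (normSq (Φ z) / δ) : ℝ) : ℂ)) =ᶠ[nhds t] fun _ => 0 := by
  by_cases h : t ∈ tsupport η
  · have hc : ContinuousAt Φ t := H.cont.continuousAt (isOpen_ball.mem_nhds (hη h))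
    have hc2 : ContinuousAt (fun z => normSq (Φ z)) t := continuous_normSq.continuousAt.comp hc
    have : ∀ᶠ z in nhds t, normSq (Φ z) < δ := by
      apply hc2.eventually_lt continuousAt_const
      simpa [H.off t ht]
    filter_upwards [this] with z hz
    rw [hcut_zero]
    · simp
    · rw [div_le_one hδ]; exact hz.le
  · have := (isClosed_tsupport η).isOpen_compl.mem_nhds h
    filter_upwards [this] with z hz
    rw [image_eq_zero_of_notMem_tsupport hz]; simp

theorem cut (H : Setup ζ₀ r p Ω S Φ) {η a : ℂ → ℂ} (hη : tsupport η ⊆ ball ζ₀ r)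
    (hηc : HasCompactSupport η) (hηs : ContDiff ℝ 1 η) (hηd : ∀ t, HasDb η (a t) t)
    {G g : ℂ → ℂ} (hG : ∀ t ∈ Ω, ContDiffAt ℝ 1 G t) (hGd : ∀ t ∈ Ω, HasDb G (g t) t)
    {δ : ℝ} (hδ : 0 < δ) :
    let b : ℂ → ℂ := fun t => (a t * G t + η t * g t) * ((hcut (normSq (Φ t) / δ) : ℝ) : ℂ) +
      η t * G t * (((deriv hcut (normSq (Φ t) / δ) / δ : ℝ) : ℂ) * dV p S Φ t)
    Continuous b ∧ HasCompactSupport b ∧ MeasureTheory.Integrable b ∧ ∫ t, b t = 0 := by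
  intro b
  refine HasDb.integral_eq_zero
    (F := fun z => η z * G z * ((hcut (normSq (Φ z) / δ) : ℝ) : ℂ)) ?_ ?_ ?_
  · rw [contDiff_iff_contDiffAt]
    intro t
    by_cases ht : t ∈ Ω
    · refine (hηs.contDiffAt.mul (hG t ht)).mul ?_
      exact ofRealCLM.contDiff.contDiffAt.comp t
        (hcut_contDiff.contDiffAt.comp t ((H.contDiffAt_V ht).div_const δ))
    · exact contDiffAt_const.congr_of_eventuallyEq (H.cut_zero hη G hδ ht)
  · exact (hηc.mul_right).mul_right
  · intro t
    by_cases ht : t ∈ Ω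
    · refine ((hηd t).mul (hGd t ht)).mul ?_
      refine HasDb.real_comp (W := fun z => normSq (Φ z)) (h := fun x => hcut (x / δ))
        (H.hasDb_V ht) ?_
      have h1 : HasDerivAt (fun x : ℝ => x / δ) (1 / δ) (normSq (Φ t)) :=
        (hasDerivAt_id _).div_const δ
      have h2 := ((hcut_contDiff.differentiable one_ne_zero) (normSq (Φ t) / δ)).hasDerivAt
      have := h2.comp (normSq (Φ t)) h1
      convert! this using 1
      ring
    · have : b t = 0 := by
        simp only [b, H.off t ht]
        simp [hcut_zero, hcut_deriv_zero]
      rw [this]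
      exact (HasDb.const 0 t).congr_of_eventuallyEq (H.cut_zero hη G hδ ht)

end Setup

namespace Setup
variable {ζ₀ : ℂ} {r : ℝ} {p : Polynomial ℂ} {Ω : Set ℂ} {S Φ : ℂ → ℂ}

theorem isOpen_ne (H : Setup ζ₀ r p Ω S Φ) : IsOpen {t | Φ t ≠ 0} := by
  have : {t | Φ t ≠ 0} = ball ζ₀ r ∩ Φ ⁻¹' {0}ᶜ := by
    ext t
    simp only [mem_ofPred_eq, mem_inter_iff, mem_preimage, mem_compl_iff, mem_singleton_iff]
    refine ⟨fun h => ⟨?_, h⟩, fun h => h.2⟩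
    by_contra h2
    exact h (H.off t fun h3 => h2 (H.sub h3))
  rw [this]
  exact H.cont.isOpen_inter_preimage isOpen_ball isOpen_compl_singleton

theorem measurable_Φ (H : Setup ζ₀ r p Ω S Φ) : Measurable Φ := by
  classical
  have : Φ = (ball ζ₀ r).piecewise Φ (fun _ => 0) := by
    ext t
    by_cases h : t ∈ ball ζ₀ r
    · simp [h]
    · rw [piecewise_eq_of_notMem _ _ _ h, H.off t fun h3 => h (H.sub h3)]
  rw [this]
  exact H.cont.measurable_piecewise continuousOn_const measurableSet_ball

theorem cacc_pointwise {P Q Φt s A : ℂ} {M C0 f h k : ℝ}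
    (hP : ‖P‖ ≤ M) (hQ : ‖Q‖ ≤ M) (hΦ : ‖Φt‖ ≤ M) (hA : ‖A‖ ≤ M) (hf0 : 0 ≤ f) (hf1 : f ≤ 1)
    (hh0 : 0 ≤ h) (hh1 : h ≤ 1) (hk0 : 0 ≤ normSq Φt * k) (hk1 : normSq Φt * k ≤ C0) :
    h * f ^ 2 * ‖s‖ ^ 2 - ((M + M ^ 2) ^ 2 + 2 * C0 * M ^ 2) ≤
    (((2 * f * A) * (conj' Φt * s) + (f : ℂ) ^ 2 * (2 * conj' (s - Q) * s)) * (h : ℂ) +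
      (f : ℂ) ^ 2 * (conj' Φt * s) * ((k : ℂ) *
        (-2 * P * conj' Φt + Φt * (2 * conj' (s - Q))))).re := by
  have hM : 0 ≤ M := (norm_nonneg _).trans hP
  set x := ‖s‖ with hx
  have hx0 : 0 ≤ x := norm_nonneg _
  set K := normSq Φt * k with hK
  have hss : conj' s * s = ((x ^ 2 : ℝ) : ℂ) := by
    rw [mul_comm, mul_conj, normSq_eq_norm_sq]
  have hPP : Φt * conj' Φt = ((normSq Φt : ℝ) : ℂ) := mul_conj _
  -- rewrite the expression
  have e : (((2 * f * A) * (conj' Φt * s) + (f : ℂ) ^ 2 * (2 * conj' (s - Q) * s)) * (h : ℂ) +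
      (f : ℂ) ^ 2 * (conj' Φt * s) * ((k : ℂ) *
        (-2 * P * conj' Φt + Φt * (2 * conj' (s - Q))))) =
      ((2 * f ^ 2 * h * x ^ 2 + 2 * f ^ 2 * K * x ^ 2 : ℝ) : ℂ) +
      (((2 * f * h : ℝ) : ℂ) * (A * conj' Φt * s) - ((2 * f ^ 2 * h : ℝ) : ℂ) * (conj' Q * s)
        - ((2 * f ^ 2 : ℝ) : ℂ) * ((k : ℂ) * (conj' Φt * conj' Φt) * P * s)
        - ((2 * f ^ 2 * K : ℝ) : ℂ) * (conj' Q * s)) := by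
    rw [hK]
    push_cast
    rw [← hPP, ← ofReal_pow x, ← hss]
    simp only [map_sub]
    ring
  rw [e, add_re, ofReal_re]
  have n1 : ‖A * conj' Φt * s‖ ≤ M * M * x := by
    rw [norm_mul, norm_mul, RCLike.norm_conj]; gcongr
  have n2 : ‖conj' Q * s‖ ≤ M * x := by
    rw [norm_mul, RCLike.norm_conj]; gcongr
  have n3 : ‖(k : ℂ) * (conj' Φt * conj' Φt) * P * s‖ ≤ K * M * x := by
    rw [norm_mul, norm_mul]
    have : ‖(k : ℂ) * (conj' Φt * conj' Φt)‖ = K := by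
      rw [norm_mul, norm_mul, RCLike.norm_conj, norm_real, ← abs_of_nonneg hk0, hK, abs_mul,
        normSq_eq_norm_sq, abs_of_nonneg (sq_nonneg ‖Φt‖), Real.norm_eq_abs]
      ring
    rw [this]; gcongr
  have l1 := neg_le_of_abs_le ((abs_re_le_norm _).trans n1)
  have l2 := (le_abs_self _).trans ((abs_re_le_norm _).trans n2)
  have l3 := (le_abs_self _).trans ((abs_re_le_norm _).trans n3)
  simp only [sub_re, re_ofReal_mul]
  have m1 := mul_le_mul_of_nonneg_left l1 (show 0 ≤ 2 * f * h by positivity)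
  have m2 := mul_le_mul_of_nonneg_left l2 (show 0 ≤ 2 * f ^ 2 * h by positivity)
  have m3 := mul_le_mul_of_nonneg_left l3 (show 0 ≤ 2 * f ^ 2 by positivity)
  have m4 := mul_le_mul_of_nonneg_left l2 (show 0 ≤ 2 * f ^ 2 * K by positivity)
  have f2 : f ^ 2 ≤ 1 := by nlinarith
  have s1 : 0 ≤ 2 * f ^ 2 * K * (x - M) ^ 2 := by positivity
  have s2 : 2 * f ^ 2 * K * M ^ 2 ≤ 2 * C0 * M ^ 2 := by
    have : f ^ 2 * K ≤ 1 * C0 := by gcongr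
    nlinarith [sq_nonneg M]
  have s3 : 0 ≤ h * (f * x - (M + M ^ 2)) ^ 2 := by positivity
  have s4 : h * (M + M ^ 2) ^ 2 ≤ 1 * (M + M ^ 2) ^ 2 := by gcongr
  have s5 : 0 ≤ 2 * (f * h * x * M) * (1 - f) := by
    have : 0 ≤ 1 - f := by linarith
    positivity
  nlinarith

end Setup

theorem hasDb_of_contDiff {F : ℂ → ℂ} (hF : ContDiff ℝ 1 F) (t : ℂ) :
    HasDb F (fderiv ℝ F t 1 + I * fderiv ℝ F t I) t :=
  ⟨_, (hF.differentiable one_ne_zero t).hasFDerivAt, rfl⟩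

theorem exists_bump (ζ₀ : ℂ) {R r : ℝ} (hR : 0 < R) (hr : R < r) :
    ∃ (f : ℂ → ℝ) (a : ℂ → ℂ), ContDiff ℝ 1 (fun t => (f t : ℂ)) ∧
      HasCompactSupport (fun t => (f t : ℂ)) ∧ tsupport (fun t => (f t : ℂ)) ⊆ ball ζ₀ r ∧
      (∀ t, 0 ≤ f t) ∧ (∀ t, f t ≤ 1) ∧ (∀ t ∈ closedBall ζ₀ R, f t = 1) ∧
      (∀ t, HasDb (fun t => (f t : ℂ)) (a t) t) ∧ Continuous a ∧
      (∀ t, t ∉ tsupport (fun t => (f t : ℂ)) → a t = 0) ∧ (∀ t ∈ ball ζ₀ R, a t = 0) := by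
  let φ : ContDiffBump ζ₀ := ⟨R, (R + r) / 2, hR, by linarith⟩
  have hs : ContDiff ℝ 1 (fun t => (φ t : ℂ)) := ofRealCLM.contDiff.comp φ.contDiff
  have hts : tsupport (fun t => (φ t : ℂ)) ⊆ tsupport φ :=
    closure_mono (fun t ht => by simpa using ht)
  have hcs : HasCompactSupport (fun t => (φ t : ℂ)) :=
    φ.hasCompactSupport.comp_left (g := fun x : ℝ => (x : ℂ)) (by simp)
  have hd := hasDb_of_contDiff hs
  obtain ⟨hc, -, -, -⟩ := HasDb.integral_eq_zero hs hcs hd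
  refine ⟨φ, _, hs, hcs, ?_, fun t => φ.nonneg, fun t => φ.le_one,
    fun t ht => φ.one_of_mem_closedBall ht, hd, hc, ?_, ?_⟩
  · refine hts.trans ?_
    rw [φ.tsupport_eq]
    exact closedBall_subset_ball (show (R + r) / 2 < r by linarith)
  · intro t ht
    have : (fun t => (φ t : ℂ)) =ᶠ[nhds t] fun _ => 0 :=
      notMem_tsupport_iff_eventuallyEq.1 ht
    exact (hd t).eq ((HasDb.const 0 t).congr_of_eventuallyEq this)
  · intro t ht
    have : (fun t => (φ t : ℂ)) =ᶠ[nhds t] fun _ => 1 := by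
      filter_upwards [isOpen_ball.mem_nhds ht] with z hz
      rw [φ.one_of_mem_closedBall (ball_subset_closedBall hz)]; simp
    exact (hd t).eq ((HasDb.const 1 t).congr_of_eventuallyEq this)

namespace Setup
variable {ζ₀ : ℂ} {r : ℝ} {p : Polynomial ℂ} {Ω : Set ℂ} {S Φ : ℂ → ℂ}

open MeasureTheory Filter Topology

theorem hcut_tendsto (v : ℝ) (hv : 0 < v) :
    ∀ᶠ n : ℕ in atTop, 2 < v / (1 / ((n : ℝ) + 1)) := by
  obtain ⟨N, hN⟩ := exists_nat_gt (2 / v)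
  filter_upwards [eventually_ge_atTop N] with n hn
  have : (N : ℝ) ≤ n := by exact_mod_cast hn
  rw [div_lt_iff₀ hv] at hN
  rw [div_div_eq_mul_div, div_one]
  nlinarith

theorem cacc (H : Setup ζ₀ r p Ω S Φ) {R : ℝ} (hR : 0 < R) (hRr : R < r) :
    IntegrableOn ({t | Φ t ≠ 0}.indicator fun t => ‖deriv S t‖) (closedBall ζ₀ R) := by
  obtain ⟨f, a, hs, hcs, hts, hf0, hf1, hfR, hd, hac, ha0, -⟩ := exists_bump ζ₀ hR hRr
  obtain ⟨C0, hC0⟩ := hcut_bound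
  set K := tsupport (fun t => (f t : ℂ)) with hK
  have hKc : IsCompact K := hcs
  obtain ⟨M1, hM1⟩ := hKc.exists_bound_of_continuousOn p.continuous.continuousOn
  obtain ⟨M2, hM2⟩ := hKc.exists_bound_of_continuousOn (f := fun t => conj' t * p.derivative.eval t)
    (continuous_conj.mul p.derivative.continuous).continuousOn
  obtain ⟨M3, hM3⟩ := hKc.exists_bound_of_continuousOn (H.cont.mono hts)
  obtain ⟨M4, hM4⟩ := hKc.exists_bound_of_continuousOn hac.continuousOn
  set M := max (max M1 M2) (max M3 M4) with hM
  set C := (M + M ^ 2) ^ 2 + 2 * C0 * M ^ 2 with hC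
  have hCC0 : 0 ≤ C0 := (hC0 0).1.trans (hC0 0).2
  have hC_nonneg : 0 ≤ C := by positivity
  have hη2s : ContDiff ℝ 1 (fun t => (f t : ℂ) * (f t : ℂ)) := hs.mul hs
  have hη2c : HasCompactSupport (fun t => (f t : ℂ) * (f t : ℂ)) := hcs.mul_left
  have hη2t : tsupport (fun t => (f t : ℂ) * (f t : ℂ)) ⊆ ball ζ₀ r :=
    (tsupport_mul_subset_left).trans hts
  have hη2d := fun t => (hd t).mul (hd t)
  have hGs : ∀ t ∈ Ω, ContDiffAt ℝ 1 (fun z => conj' (Φ z) * deriv S z) t := fun t ht =>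
    ((conjCLE : ℂ →L[ℝ] ℂ).contDiff.contDiffAt.comp t (H.contDiffAt_Φ ht)).mul (H.contDiffAt_S' ht)
  have hGd := fun t (ht : t ∈ Ω) => (H.hasDb_conjΦ ht).mul (HasDb.of_hol
    ((H.hol.analyticAt (H.isOpen.mem_nhds ht)).deriv.differentiableAt.hasDerivAt))
  -- the basic estimate
  have key : ∀ δ : ℝ, 0 < δ → ∫⁻ t, ENNReal.ofReal (hcut (normSq (Φ t) / δ) * f t ^ 2
      * ‖deriv S t‖ ^ 2) ≤ ENNReal.ofReal (C * volume.real K) := by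
    intro δ hδ
    obtain ⟨-, -, hbi, hb0⟩ := H.cut hη2t hη2c hη2s hη2d hGs hGd hδ
    set b := fun t => ((a t * (f t : ℂ) + (f t : ℂ) * a t) * (conj' (Φ t) * deriv S t) +
      (f t : ℂ) * (f t : ℂ) * ((2 * conj' (deriv S t - conj' t * p.derivative.eval t)) * deriv S t
        + conj' (Φ t) * 0)) * ((hcut (normSq (Φ t) / δ) : ℝ) : ℂ) +
      (f t : ℂ) * (f t : ℂ) * (conj' (Φ t) * deriv S t) *
        (((deriv hcut (normSq (Φ t) / δ) / δ : ℝ) : ℂ) * dV p S Φ t) with hb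
    have hpt : ∀ t, hcut (normSq (Φ t) / δ) * f t ^ 2 * ‖deriv S t‖ ^ 2 ≤
        (b t).re + K.indicator (fun _ => C) t := by
      intro t
      by_cases ht : t ∈ K
      · rw [indicator_of_mem ht]
        have hk : normSq (Φ t) * (deriv hcut (normSq (Φ t) / δ) / δ) =
            normSq (Φ t) / δ * deriv hcut (normSq (Φ t) / δ) := by ring
        have := cacc_pointwise (P := p.eval t) (Q := conj' t * p.derivative.eval t)
          (Φt := Φ t) (s := deriv S t) (A := a t) (M := M) (C0 := C0) (f := f t)
          (h := hcut (normSq (Φ t) / δ)) (k := deriv hcut (normSq (Φ t) / δ) / δ)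
          ((hM1 t ht).trans (by simp [hM])) ((hM2 t ht).trans (by simp [hM]))
          ((hM3 t ht).trans (by simp [hM])) ((hM4 t ht).trans (by simp [hM]))
          (hf0 t) (hf1 t) (hcut_nonneg _) (hcut_le_one _) (by rw [hk]; exact (hC0 _).1)
          (by rw [hk]; exact (hC0 _).2)
        rw [← hC] at this
        rw [← sub_le_iff_le_add]
        refine this.trans (le_of_eq ?_)
        congr 1
        simp only [hb, dV]
        ring
      · rw [indicator_of_notMem ht]
        have h1 : (f t : ℂ) = 0 := image_eq_zero_of_notMem_tsupport (f := fun t => (f t : ℂ)) ht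
        have h2 : f t = 0 := by exact_mod_cast h1
        simp [hb, h2]
    have hKint : Integrable (K.indicator (fun _ => C)) :=
      (integrable_indicator_iff hKc.measurableSet).2 (integrableOn_const hKc.measure_lt_top.ne)
    have hKint2 : Integrable (fun t => (b t).re + K.indicator (fun _ => C) t) :=
      (hbi.re).add hKint
    calc _ ≤ ∫⁻ t, ENNReal.ofReal ((b t).re + K.indicator (fun _ => C) t) :=
          lintegral_mono fun t => ENNReal.ofReal_le_ofReal (hpt t)
      _ = ENNReal.ofReal (∫ t, ((b t).re + K.indicator (fun _ => C) t)) := by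
          rw [ofReal_integral_eq_lintegral_ofReal hKint2]
          refine Eventually.of_forall fun t => le_trans ?_ (hpt t)
          have := hcut_nonneg (normSq (Φ t) / δ)
          simp only [Pi.zero_apply]
          positivity
      _ = _ := by
          have hre : ∫ t, (b t).re = 0 := by
            have h := integral_re hbi
            simp only [RCLike.re_eq_complex_re] at h
            rw [h, hb0]; simp
          have := integral_add (hbi.re) hKint
          simp only [RCLike.re_eq_complex_re] at this
          rw [this, hre, integral_indicator hKc.measurableSet, setIntegral_const]
          simp [mul_comm]
  -- Fatou
  have hΦm := H.measurable_Φ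
  have hSm : Measurable (deriv S) := measurable_deriv S
  have hfc : Continuous f := by
    have := continuous_re.comp hs.continuous
    simpa [Function.comp_def] using this
  have hmeas : ∀ n : ℕ, Measurable fun t => ENNReal.ofReal
      (hcut (normSq (Φ t) / (1 / ((n : ℝ) + 1))) * f t ^ 2 * ‖deriv S t‖ ^ 2) := by
    intro n
    refine ENNReal.measurable_ofReal.comp (Measurable.mul (Measurable.mul ?_ ?_) ?_)
    · exact hcut_contDiff.continuous.measurable.comp
        ((continuous_normSq.measurable.comp hΦm).div_const _)
    · exact (hfc.pow 2).measurable
    · exact hSm.norm.pow_const 2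
  have fatou := lintegral_liminf_le hmeas (μ := (volume : Measure ℂ)) (u := atTop)
  have hfin : ∫⁻ t, liminf (fun n : ℕ => ENNReal.ofReal
      (hcut (normSq (Φ t) / (1 / ((n : ℝ) + 1))) * f t ^ 2 * ‖deriv S t‖ ^ 2)) atTop < ⊤ := by
    refine fatou.trans_lt ((liminf_le_of_le (f := atTop) ?_ ?_).trans_lt
      (ENNReal.ofReal_lt_top (r := C * volume.real K)))
    · isBoundedDefault
    · intro x hx
      obtain ⟨n, hn⟩ := hx.exists
      exact hn.trans (key _ (by positivity))
  have hN : MeasurableSet {t | Φ t ≠ 0} := H.isOpen_ne.measurableSet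
  have hlim : ∫⁻ t in closedBall ζ₀ R, ENNReal.ofReal
      ({t | Φ t ≠ 0}.indicator (fun t => ‖deriv S t‖ ^ 2) t) < ⊤ := by
    refine lt_of_le_of_lt ?_ hfin
    rw [← lintegral_indicator measurableSet_closedBall]
    refine lintegral_mono fun t => ?_
    by_cases ht : t ∈ closedBall ζ₀ R
    · rw [indicator_of_mem ht]
      by_cases h0 : Φ t = 0
      · simp [h0]
      · have h1 : t ∈ {t | Φ t ≠ 0} := h0
        rw [indicator_of_mem h1]
        have hev : ∀ᶠ n : ℕ in atTop, ENNReal.ofReal (‖deriv S t‖ ^ 2) = ENNReal.ofReal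
            (hcut (normSq (Φ t) / (1 / ((n : ℝ) + 1))) * f t ^ 2 * ‖deriv S t‖ ^ 2) := by
          filter_upwards [hcut_tendsto (normSq (Φ t)) (normSq_pos.2 h0)] with n hn
          rw [hcut_one hn.le, hfR t ht]; simp
        have : Tendsto (fun n : ℕ => ENNReal.ofReal
            (hcut (normSq (Φ t) / (1 / ((n : ℝ) + 1))) * f t ^ 2 * ‖deriv S t‖ ^ 2)) atTop
            (𝓝 (ENNReal.ofReal (‖deriv S t‖ ^ 2))) :=
          tendsto_const_nhds.congr' hev
        exact this.liminf_eq.ge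
    · rw [indicator_of_notMem ht]; exact zero_le
  have hsq : IntegrableOn ({t | Φ t ≠ 0}.indicator fun t => ‖deriv S t‖ ^ 2)
      (closedBall ζ₀ R) := by
    refine ⟨((hSm.norm.pow_const 2).indicator hN).aestronglyMeasurable, ?_⟩
    rw [hasFiniteIntegral_iff_ofReal]
    · exact hlim
    · exact Eventually.of_forall fun t => indicator_nonneg (fun _ _ => by positivity) t
  have hone : IntegrableOn (fun _ : ℂ => (1 : ℝ)) (closedBall ζ₀ R) :=
    integrableOn_const (isCompact_closedBall ζ₀ R).measure_lt_top.ne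
  refine (hsq.add hone).mono' (hSm.norm.indicator hN).aestronglyMeasurable ?_
  refine Eventually.of_forall fun t => ?_
  by_cases h1 : t ∈ {t | Φ t ≠ 0}
  · simp only [Pi.add_apply, indicator_of_mem h1, norm_norm]
    nlinarith [sq_nonneg (‖deriv S t‖ - 1)]
  · simp [indicator_of_notMem h1]

end Setup

namespace Setup
variable {ζ₀ : ℂ} {r : ℝ} {p : Polynomial ℂ} {Ω : Set ℂ} {S Φ : ℂ → ℂ}

open MeasureTheory Filter Topology

theorem weak (H : Setup ζ₀ r p Ω S Φ) {R : ℝ} (hR : 0 < R) (hRr : R < r) {ψ a : ℂ → ℂ}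
    (hs : ContDiff ℝ 1 ψ) (hcs : HasCompactSupport ψ) (hts : tsupport ψ ⊆ closedBall ζ₀ R)
    (hd : ∀ t, HasDb ψ (a t) t) :
    ∫ t, {t | Φ t ≠ 0}.indicator (fun t => a t * Φ t + ψ t * (-2 * p.eval t)) t = 0 := by
  obtain ⟨hac, -, -, -⟩ := HasDb.integral_eq_zero hs hcs hd
  obtain ⟨C0, hC0⟩ := hcut_bound
  set K := tsupport ψ with hK
  have hKc : IsCompact K := hcs
  have hKr : K ⊆ ball ζ₀ r := hts.trans (closedBall_subset_ball hRr)
  have ha0 : ∀ t, t ∉ K → a t = 0 := by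
    intro t ht
    exact (hd t).eq ((HasDb.const 0 t).congr_of_eventuallyEq
      (notMem_tsupport_iff_eventuallyEq.1 ht))
  obtain ⟨M1, hM1⟩ := hKc.exists_bound_of_continuousOn p.continuous.continuousOn
  obtain ⟨M2, hM2⟩ := hKc.exists_bound_of_continuousOn (f := fun t => conj' t * p.derivative.eval t)
    (continuous_conj.mul p.derivative.continuous).continuousOn
  obtain ⟨M3, hM3⟩ := hKc.exists_bound_of_continuousOn (H.cont.mono hKr)
  obtain ⟨M4, hM4⟩ := hKc.exists_bound_of_continuousOn hac.continuousOn
  obtain ⟨M5, hM5⟩ := hKc.exists_bound_of_continuousOn hs.continuous.continuousOn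
  set M := max 0 (max (max M1 M2) (max (max M3 M4) M5)) with hM
  have hM0 : 0 ≤ M := by simp [hM]
  have hCC0 : 0 ≤ C0 := (hC0 0).1.trans (hC0 0).2
  have hN : MeasurableSet {t | Φ t ≠ 0} := H.isOpen_ne.measurableSet
  let b : ℕ → ℂ → ℂ := fun n t => (a t * Φ t + ψ t * (-2 * p.eval t)) *
      ((hcut (normSq (Φ t) / (1 / ((n : ℝ) + 1))) : ℝ) : ℂ) +
      ψ t * Φ t * (((deriv hcut (normSq (Φ t) / (1 / ((n : ℝ) + 1))) / (1 / ((n : ℝ) + 1)) : ℝ) : ℂ)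
        * dV p S Φ t)
  have hb := fun n : ℕ => H.cut hKr hcs hs hd (fun t ht => H.contDiffAt_Φ ht)
    (fun t ht => H.hasDb_Φ ht) (δ := 1 / ((n : ℝ) + 1)) (by positivity)
  have hb0 : ∀ n, ∫ t, b n t = 0 := fun n => (hb n).2.2.2
  have hbm : ∀ n, AEStronglyMeasurable (b n) volume := fun n => (hb n).2.2.1.aestronglyMeasurable
  let B : ℂ → ℝ := (closedBall ζ₀ R).indicator fun t =>
    3 * M ^ 2 + 2 * C0 * M * (2 * M) +
      2 * C0 * M * ({t | Φ t ≠ 0}.indicator (fun t => ‖deriv S t‖)) t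
  have hBi : Integrable B := by
    refine (integrable_indicator_iff measurableSet_closedBall).2 ?_
    refine Integrable.add ?_ ((H.cacc hR hRr).const_mul _)
    exact integrableOn_const (isCompact_closedBall ζ₀ R).measure_lt_top.ne
  have hbound : ∀ n t, ‖b n t‖ ≤ B t := by
    intro n t
    have hB0 : 0 ≤ B t := indicator_nonneg (fun t _ => by
      have : 0 ≤ ({t | Φ t ≠ 0}.indicator (fun t => ‖deriv S t‖)) t :=
        indicator_nonneg (fun _ _ => norm_nonneg _) t
      positivity) t
    by_cases ht : t ∈ K
    · by_cases h0 : Φ t = 0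
      · have : b n t = 0 := by
          simp only [b, h0]
          simp [hcut_zero, hcut_deriv_zero]
        rw [this]; simpa
      · simp only [B, indicator_of_mem (hts ht)]
        rw [indicator_of_mem (show t ∈ {t | Φ t ≠ 0} from h0)]
        have e1 := (hM1 t ht).trans (show M1 ≤ M by simp [hM])
        have e2 := (hM2 t ht).trans (show M2 ≤ M by simp [hM])
        have e3 := (hM3 t ht).trans (show M3 ≤ M by simp [hM])
        have e4 := (hM4 t ht).trans (show M4 ≤ M by simp [hM])
        have e5 := (hM5 t ht).trans (show M5 ≤ M by simp [hM])
        set δ : ℝ := 1 / ((n : ℝ) + 1)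
        have hδ : 0 < δ := by positivity
        set k := deriv hcut (normSq (Φ t) / δ) / δ with hk
        have hk0 : 0 ≤ k := div_nonneg (hcut_deriv_nonneg _) hδ.le
        have hkC : normSq (Φ t) * k ≤ C0 := by
          have : normSq (Φ t) * k = normSq (Φ t) / δ * deriv hcut (normSq (Φ t) / δ) := by
            rw [hk]; ring
          rw [this]; exact (hC0 _).2
        have hh : ‖((hcut (normSq (Φ t) / δ) : ℝ) : ℂ)‖ ≤ 1 := by
          rw [norm_real, Real.norm_eq_abs, abs_of_nonneg (hcut_nonneg _)]
          exact hcut_le_one _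
        have t1 : ‖(a t * Φ t + ψ t * (-2 * p.eval t)) *
            ((hcut (normSq (Φ t) / δ) : ℝ) : ℂ)‖ ≤ (M * M + M * (2 * M)) * 1 := by
          rw [norm_mul]
          gcongr
          refine (norm_add_le _ _).trans ?_
          rw [norm_mul, norm_mul, norm_mul, norm_neg, Complex.norm_ofNat]
          gcongr
        have t2 : ‖dV p S Φ t‖ ≤ ‖Φ t‖ * (2 * (2 * M + ‖deriv S t‖)) := by
          unfold dV
          refine (norm_add_le _ _).trans ?_
          simp only [norm_mul, norm_neg, Complex.norm_ofNat, RCLike.norm_conj]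
          have : ‖deriv S t - conj' t * p.derivative.eval t‖ ≤ ‖deriv S t‖ + M :=
            (norm_sub_le _ _).trans (by gcongr)
          have h1 := mul_le_mul_of_nonneg_left this (norm_nonneg (Φ t))
          have h2 := mul_le_mul_of_nonneg_left e1 (norm_nonneg (Φ t))
          nlinarith
        have t3 : ‖ψ t * Φ t * ((k : ℂ) * dV p S Φ t)‖ ≤
            M * (C0 * (2 * (2 * M + ‖deriv S t‖))) := by
          calc _ = ‖ψ t‖ * (‖Φ t‖ * k * ‖dV p S Φ t‖) := by
                rw [norm_mul, norm_mul, norm_mul, norm_real, Real.norm_eq_abs, abs_of_nonneg hk0]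
                ring
            _ ≤ ‖ψ t‖ * (‖Φ t‖ * k * (‖Φ t‖ * (2 * (2 * M + ‖deriv S t‖)))) := by gcongr
            _ = ‖ψ t‖ * ((normSq (Φ t) * k) * (2 * (2 * M + ‖deriv S t‖))) := by
                rw [normSq_eq_norm_sq]; ring
            _ ≤ _ := by
                have hnn := normSq_nonneg (Φ t)
                gcongr
        refine (norm_add_le _ _).trans ((add_le_add t1 t3).trans (le_of_eq ?_))
        ring
    · have : b n t = 0 := by
        simp [b, image_eq_zero_of_notMem_tsupport ht, ha0 t ht]
      rw [this]; simpa
  have hlim : ∀ t, Tendsto (fun n => b n t) atTop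
      (𝓝 ({t | Φ t ≠ 0}.indicator (fun t => a t * Φ t + ψ t * (-2 * p.eval t)) t)) := by
    intro t
    by_cases h0 : Φ t = 0
    · have : ∀ n, b n t = 0 := by
        intro n
        simp only [b, h0]
        simp [hcut_zero, hcut_deriv_zero]
      simp [this, h0]
    · rw [indicator_of_mem (show t ∈ {t | Φ t ≠ 0} from h0)]
      refine tendsto_const_nhds.congr' ?_
      filter_upwards [hcut_tendsto (normSq (Φ t)) (normSq_pos.2 h0)] with n hn
      simp only [b]
      rw [hcut_one hn.le, hcut_deriv_zero' hn]
      simp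
  have := tendsto_integral_of_dominated_convergence B hbm hBi
    (fun n => Eventually.of_forall (hbound n)) (Eventually.of_forall hlim)
  simp only [hb0] at this
  exact (tendsto_nhds_unique this tendsto_const_nhds)

end Setup

section

open MeasureTheory Filter Topology

/-- regularised Cauchy kernel -/
noncomputable def kern (s : ℝ) (t : ℂ) : ℂ := conj' t * (((normSq t + s ^ 2)⁻¹ : ℝ) : ℂ)

theorem kern_zero (t : ℂ) : kern 0 t = t⁻¹ := by
  rw [kern, Complex.inv_def, zero_pow two_ne_zero, add_zero]

theorem norm_kern_le (s : ℝ) (t : ℂ) : ‖kern s t‖ ≤ ‖t‖⁻¹ := by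
  have h1 := normSq_nonneg t
  rcases eq_or_ne t 0 with rfl | ht
  · simp [kern]
  have h2 := normSq_pos.2 ht
  rw [kern, norm_mul, RCLike.norm_conj, norm_real, Real.norm_eq_abs,
    abs_of_nonneg (by positivity)]
  have : (normSq t + s ^ 2)⁻¹ ≤ (normSq t)⁻¹ := by
    gcongr; nlinarith [sq_nonneg s]
  calc _ ≤ ‖t‖ * (normSq t)⁻¹ := by gcongr
    _ = ‖t‖⁻¹ := by
      rw [normSq_eq_norm_sq]
      have : ‖t‖ ≠ 0 := norm_ne_zero_iff.2 ht
      field_simp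

theorem kern_contDiff {s : ℝ} (hs : s ≠ 0) : ContDiff ℝ 1 (kern s) := by
  refine ContDiff.mul (conjCLE : ℂ →L[ℝ] ℂ).contDiff (ofRealCLM.contDiff.comp ?_)
  refine ContDiff.inv ?_ ?_
  · simp only [normSq_eq_norm_sq]
    exact (contDiff_norm_sq ℝ).add contDiff_const
  · intro t
    have := normSq_nonneg t
    positivity

theorem kern_hasDb {s : ℝ} (hs : s ≠ 0) (w t : ℂ) :
    HasDb (fun z => kern s (z - w)) (2 * ((s ^ 2 / (normSq (t - w) + s ^ 2) ^ 2 : ℝ) : ℂ)) t := by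
  have h0 : HasDerivAt (fun z : ℂ => z - w) 1 t := (hasDerivAt_id t).sub_const w
  have h1 := HasDb.conj_hol h0
  have h2 := (HasDb.of_hol h0).mul h1
  simp only [mul_conj] at h2
  have hpos : normSq (t - w) + s ^ 2 ≠ 0 := by
    have := normSq_nonneg (t - w)
    positivity
  have h3 : HasDerivAt (fun x : ℝ => (x + s ^ 2)⁻¹) (-1 / (normSq (t - w) + s ^ 2) ^ 2)
      (normSq (t - w)) := ((hasDerivAt_id _).add_const _).inv hpos
  have h4 := HasDb.real_comp (W := fun z => normSq (z - w)) h2 h3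
  have h5 := h1.mul h4
  convert! h5 using 1
  have hc : (normSq (t - w) : ℂ) + s ^ 2 ≠ 0 := by exact_mod_cast hpos
  push_cast
  simp only [map_one, mul_one, zero_mul, zero_add]
  have e : conj' (t - w) * (-1 / ((normSq (t - w) : ℂ) + s ^ 2) ^ 2 * ((t - w) * 2)) =
    (-1 / ((normSq (t - w) : ℂ) + s ^ 2) ^ 2) * 2 * (normSq (t - w) : ℂ) := by
    rw [← mul_conj]; ring
  rw [e]
  field_simp
  ring

theorem sn_pos (n : ℕ) : (0 : ℝ) < 1 / ((n : ℝ) + 1) := by positivity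

theorem kern_tendsto (t : ℂ) :
    Tendsto (fun n : ℕ => kern (1 / ((n : ℝ) + 1)) t) atTop (𝓝 t⁻¹) := by
  rcases eq_or_ne t 0 with rfl | ht
  · simp [kern]
  rw [← kern_zero]
  have hc : ContinuousAt (fun s : ℝ => kern s t) 0 := by
    unfold kern
    refine continuousAt_const.mul (continuous_ofReal.continuousAt.comp ?_)
    refine ContinuousAt.inv₀ (by fun_prop) ?_
    simpa using ht
  exact hc.tendsto.comp tendsto_one_div_add_atTop_nhds_zero_nat

theorem inv_integrableOn (ρ : ℝ) : IntegrableOn (fun t : ℂ => ‖t‖⁻¹) (ball 0 ρ) := by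
  refine integrableOn_ball_of_norm_le_rpow (C := 1) (α := 1) (by simp) (by simp)
    (Eventually.of_forall fun t => ?_) ?_
  · simp [Real.rpow_neg_one]
  · exact (measurable_norm.inv).aestronglyMeasurable

theorem inv_integrable_shift (w : ℂ) (ρ : ℝ) :
    Integrable ((ball 0 ρ).indicator fun t : ℂ => ‖t - w‖⁻¹) := by
  have h := (integrable_indicator_iff measurableSet_ball).2 (inv_integrableOn (ρ + ‖w‖))
  have h2 := h.comp_sub_right w
  refine h2.mono ?_ (Eventually.of_forall fun t => ?_)
  · exact (((measurable_id.sub_const w).norm.inv).indicator measurableSet_ball).aestronglyMeasurable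
  · by_cases ht : t ∈ ball 0 ρ
    · have : t - w ∈ ball (0:ℂ) (ρ + ‖w‖) := by
        rw [mem_ball_zero_iff] at ht ⊢
        exact (norm_sub_le _ _).trans_lt (by linarith)
      rw [indicator_of_mem ht, indicator_of_mem this]
    · rw [indicator_of_notMem ht]; simp

theorem bdd_le {v : ℂ → ℂ} {M ρ : ℝ} (hM : ∀ t, ‖v t‖ ≤ M)
    (hv0 : ∀ t, t ∉ ball (0 : ℂ) ρ → v t = 0) (w t : ℂ) {x : ℂ} (hx : ‖x‖ ≤ ‖t - w‖⁻¹) :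
    ‖v t * x‖ ≤ M * (ball 0 ρ).indicator (fun t : ℂ => ‖t - w‖⁻¹) t := by
  have hM0 : 0 ≤ M := (norm_nonneg _).trans (hM 0)
  by_cases ht : t ∈ ball 0 ρ
  · rw [indicator_of_mem ht, norm_mul]
    gcongr
    exact hM t
  · rw [hv0 t ht, indicator_of_notMem ht]; simp

theorem cauchy_integrable {v : ℂ → ℂ} {M ρ : ℝ} (hvm : Measurable v) (hM : ∀ t, ‖v t‖ ≤ M)
    (hv0 : ∀ t, t ∉ ball (0 : ℂ) ρ → v t = 0) (w : ℂ) :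
    Integrable (fun t => v t * (t - w)⁻¹) := by
  refine ((inv_integrable_shift w ρ).const_mul M).mono' ?_
    (Eventually.of_forall fun t => bdd_le hM hv0 w t (by simp))
  exact (hvm.mul (measurable_id.sub_const w).inv).aestronglyMeasurable

theorem kern_measurable (s : ℝ) : Measurable (kern s) := by
  unfold kern
  refine continuous_conj.measurable.mul (measurable_ofReal.comp ?_)
  exact (continuous_normSq.measurable.add_const _).inv

theorem kern_limit {v : ℂ → ℂ} {M ρ : ℝ} (hvm : Measurable v) (hM : ∀ t, ‖v t‖ ≤ M)
    (hv0 : ∀ t, t ∉ ball (0 : ℂ) ρ → v t = 0) (w : ℂ) :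
    Tendsto (fun n : ℕ => ∫ t, v t * kern (1 / ((n : ℝ) + 1)) (t - w)) atTop
      (𝓝 (∫ t, v t * (t - w)⁻¹)) := by
  refine tendsto_integral_of_dominated_convergence _ (fun n => ?_)
    ((inv_integrable_shift w ρ).const_mul M)
    (fun n => Eventually.of_forall fun t => bdd_le hM hv0 w t (norm_kern_le _ _))
    (Eventually.of_forall fun t => (kern_tendsto _).const_mul _)
  exact (hvm.mul ((kern_measurable _).comp (measurable_id.sub_const w))).aestronglyMeasurable

theorem cauchy_continuous {v : ℂ → ℂ} {M ρ : ℝ} (hvm : Measurable v) (hM : ∀ t, ‖v t‖ ≤ M)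
    (hv0 : ∀ t, t ∉ ball (0 : ℂ) ρ → v t = 0) :
    Continuous (fun w => ∫ t, v t * (t - w)⁻¹) := by
  have hM0 : 0 ≤ M := (norm_nonneg _).trans (hM 0)
  rw [continuous_iff_continuousAt]
  intro w₀
  have hmem : ball (0 : ℂ) (‖w₀‖ + 1) ∈ 𝓝 w₀ := isOpen_ball.mem_nhds (by simp)
  refine ContinuousOn.continuousAt (s := ball 0 (‖w₀‖ + 1)) ?_ hmem
  set ρ' := ρ + (‖w₀‖ + 1) with hρ'
  let ε : ℕ → ℝ := fun n => ∫ t in ball (0 : ℂ) ρ', ‖kern (1 / ((n : ℝ) + 1)) t - t⁻¹‖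
  have hmd : ∀ n : ℕ, Measurable fun t => ‖kern (1 / ((n : ℝ) + 1)) t - t⁻¹‖ := fun n =>
    ((kern_measurable _).sub measurable_inv).norm
  have hdb : ∀ (n : ℕ) (t : ℂ), ‖kern (1 / ((n : ℝ) + 1)) t - t⁻¹‖ ≤ 2 * ‖t‖⁻¹ := by
    intro n t
    refine (norm_sub_le _ _).trans ?_
    have := norm_kern_le (1 / ((n : ℝ) + 1)) t
    rw [norm_inv]; linarith
  have hdi : ∀ n : ℕ, IntegrableOn (fun t => ‖kern (1 / ((n : ℝ) + 1)) t - t⁻¹‖) (ball 0 ρ') := by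
    intro n
    refine ((inv_integrableOn ρ').const_mul 2).mono' (hmd n).aestronglyMeasurable
      (Eventually.of_forall fun t => ?_)
    rw [norm_norm]; exact hdb n t
  have hε : Tendsto ε atTop (𝓝 0) := by
    have := tendsto_integral_of_dominated_convergence (μ := volume.restrict (ball (0 : ℂ) ρ'))
      (F := fun (n : ℕ) t => ‖kern (1 / ((n : ℝ) + 1)) t - t⁻¹‖) (f := fun _ => (0 : ℝ)) _
      (fun n => (hmd n).aestronglyMeasurable) ((inv_integrableOn ρ').const_mul 2)
      (fun n => Eventually.of_forall fun t => by rw [norm_norm]; exact hdb n t)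
      (Eventually.of_forall fun t => by
        have := ((kern_tendsto t).sub_const t⁻¹).norm
        simpa using this)
    rw [integral_zero] at this
    exact this
  have hki : ∀ (n : ℕ) (w : ℂ), Integrable fun t => v t * kern (1 / ((n : ℝ) + 1)) (t - w) := by
    intro n w
    refine ((inv_integrable_shift w ρ).const_mul M).mono' ?_
      (Eventually.of_forall fun t => bdd_le hM hv0 w t (norm_kern_le _ _))
    exact (hvm.mul ((kern_measurable _).comp (measurable_id.sub_const w))).aestronglyMeasurable
  have hunif : TendstoUniformlyOn (fun (n : ℕ) w => ∫ t, v t * kern (1 / ((n : ℝ) + 1)) (t - w))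
      (fun w => ∫ t, v t * (t - w)⁻¹) atTop (ball 0 (‖w₀‖ + 1)) := by
    rw [Metric.tendstoUniformlyOn_iff]
    intro e he
    have hε2 : Tendsto (fun n => M * ε n) atTop (𝓝 0) := by simpa using hε.const_mul M
    filter_upwards [hε2.eventually_lt_const he] with n hn w hw
    refine lt_of_le_of_lt ?_ hn
    rw [dist_comm, dist_eq_norm, ← integral_sub (hki n w) (cauchy_integrable hvm hM hv0 w)]
    let g : ℂ → ℝ := (ball (0 : ℂ) ρ').indicator fun t => ‖kern (1 / ((n : ℝ) + 1)) t - t⁻¹‖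
    have hgi : Integrable g := (integrable_indicator_iff measurableSet_ball).2 (hdi n)
    have hgε : ∫ t, M * g (t - w) = M * ε n := by
      rw [integral_const_mul, integral_sub_right_eq_self g, integral_indicator measurableSet_ball]
    rw [← hgε]
    refine norm_integral_le_of_norm_le ((hgi.comp_sub_right w).const_mul M)
      (Eventually.of_forall fun t => ?_)
    rw [← mul_sub]
    by_cases ht : t ∈ ball (0 : ℂ) ρ
    · have : t - w ∈ ball (0 : ℂ) ρ' := by
        rw [mem_ball_zero_iff] at ht hw ⊢
        exact (norm_sub_le _ _).trans_lt (by linarith)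
      simp only [g, indicator_of_mem this]
      rw [norm_mul]
      gcongr
      exact hM t
    · rw [hv0 t ht]
      simp only [zero_mul, norm_zero]
      exact mul_nonneg hM0 (indicator_nonneg (fun _ _ => norm_nonneg _) _)
  refine hunif.continuousOn (Frequently.of_forall fun n => Continuous.continuousOn ?_)
  -- each regularised transform is continuous
  have hs : (1 / ((n : ℝ) + 1)) ≠ 0 := (sn_pos n).ne'
  set s := 1 / ((n : ℝ) + 1)
  have hkb : ∀ t, ‖kern s t‖ ≤ (1 + s⁻¹ ^ 2) := by
    intro t
    rw [kern, norm_mul, RCLike.norm_conj, norm_real, Real.norm_eq_abs,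
      abs_of_nonneg (by have := normSq_nonneg t; positivity), normSq_eq_norm_sq,
      ← div_eq_mul_inv, div_le_iff₀ (by positivity)]
    have : s⁻¹ ^ 2 * s ^ 2 = 1 := by rw [← mul_pow, inv_mul_cancel₀ hs]; simp
    have h5 : 0 ≤ s⁻¹ ^ 2 * ‖t‖ ^ 2 := by positivity
    nlinarith [sq_nonneg (‖t‖ - 1), sq_nonneg s]
  refine continuous_of_dominated (bound := fun t => M * (1 + s⁻¹ ^ 2) *
    (ball (0 : ℂ) ρ).indicator (fun _ => 1) t)
    (fun w => (hki n w).aestronglyMeasurable) (fun w => Eventually.of_forall fun t => ?_) ?_ ?_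
  · by_cases ht : t ∈ ball (0 : ℂ) ρ
    · rw [indicator_of_mem ht, norm_mul, mul_one]
      gcongr
      · exact hM t
      · exact hkb _
    · rw [hv0 t ht, indicator_of_notMem ht]; simp
  · refine Integrable.const_mul ?_ _
    exact (integrable_indicator_iff measurableSet_ball).2 (integrableOn_const measure_ball_lt_top.ne)
  · refine Eventually.of_forall fun t => continuous_const.mul ?_
    exact (kern_contDiff hs).continuous.comp (continuous_const.sub continuous_id)

/-- the constant of the approximate identity (in fact it equals `π`) -/
noncomputable def c0 : ℝ := ∫ t : ℂ, ((1 + ‖t‖ ^ 2) ^ 2)⁻¹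

theorem c0_integrable : Integrable (fun t : ℂ => ((1 + ‖t‖ ^ 2) ^ 2)⁻¹) := by
  have := integrable_rpow_neg_one_add_norm_sq (E := ℂ) (μ := volume) (r := 4) (by simp; norm_num)
  refine this.congr (Eventually.of_forall fun t => ?_)
  have h : (-4 / 2 : ℝ) = -(2 : ℕ) := by norm_num
  simp only [h]
  rw [Real.rpow_neg (by positivity), Real.rpow_natCast]

theorem c0_pos : 0 < c0 := by
  unfold c0
  rw [integral_pos_iff_support_of_nonneg (fun t => by positivity) c0_integrable]
  have : Function.support (fun t : ℂ => ((1 + ‖t‖ ^ 2) ^ 2)⁻¹) = univ := by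
    ext t
    simp only [Function.mem_support, mem_univ, iff_true]
    positivity
  rw [this]
  simp

theorem approx_id {u : ℂ → ℂ} {M : ℝ} (hu : Continuous u) (hM : ∀ t, ‖u t‖ ≤ M) (w : ℂ) :
    Tendsto (fun n : ℕ => ∫ t, u t * (((1 / ((n : ℝ) + 1)) ^ 2 /
      (normSq (t - w) + (1 / ((n : ℝ) + 1)) ^ 2) ^ 2 : ℝ) : ℂ)) atTop (𝓝 (c0 * u w)) := by
  have hM0 : 0 ≤ M := (norm_nonneg _).trans (hM 0)
  have e : ∀ s : ℝ, 0 < s → ∫ t, u t * ((s ^ 2 / (normSq (t - w) + s ^ 2) ^ 2 : ℝ) : ℂ) =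
      ∫ t, u (s • t + w) * ((((1 + ‖t‖ ^ 2) ^ 2)⁻¹ : ℝ) : ℂ) := by
    intro s hs
    let g : ℂ → ℂ := fun t => u (t + w) * ((s ^ 2 / (normSq t + s ^ 2) ^ 2 : ℝ) : ℂ)
    have h1 := integral_sub_right_eq_self g w (μ := volume)
    have h2 := Measure.integral_comp_smul (volume : Measure ℂ) g s
    have h3 : ∀ t, g (s • t) = ((s ^ 2)⁻¹ : ℝ) •
        (u (s • t + w) * ((((1 + ‖t‖ ^ 2) ^ 2)⁻¹ : ℝ) : ℂ)) := by
      intro t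
      have hr : s ^ 2 / (normSq (s • t) + s ^ 2) ^ 2 = (s ^ 2)⁻¹ * ((1 + ‖t‖ ^ 2) ^ 2)⁻¹ := by
        rw [normSq_eq_norm_sq, norm_smul, Real.norm_eq_abs, abs_of_pos hs]
        have : (s * ‖t‖) ^ 2 + s ^ 2 ≠ 0 := by positivity
        have : (1 + ‖t‖ ^ 2) ≠ 0 := by positivity
        field_simp
        ring
      change u (s • t + w) * ((s ^ 2 / (normSq (s • t) + s ^ 2) ^ 2 : ℝ) : ℂ) = _
      rw [hr, real_smul (x := (s ^ 2)⁻¹), ofReal_mul]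
      ring
    simp only [h3, integral_smul] at h2
    rw [Complex.finrank_real_complex, abs_of_pos (by positivity)] at h2
    have h4 := smul_right_injective ℂ (show (s ^ 2)⁻¹ ≠ 0 by positivity) h2
    rw [h4, ← h1]
    simp [g]
  simp only [fun n : ℕ => e _ (sn_pos n)]
  have hlim : c0 * u w = ∫ t : ℂ, u w * ((((1 + ‖t‖ ^ 2) ^ 2)⁻¹ : ℝ) : ℂ) := by
    rw [integral_const_mul, mul_comm]
    congr 1
    exact (integral_ofReal (𝕜 := ℂ) (μ := volume) (f := fun t : ℂ => ((1 + ‖t‖ ^ 2) ^ 2)⁻¹)).symm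
  rw [hlim]
  refine tendsto_integral_of_dominated_convergence (fun t => M * ((1 + ‖t‖ ^ 2) ^ 2)⁻¹)
    (fun n => ?_) (c0_integrable.const_mul M) (fun n => Eventually.of_forall fun t => ?_)
    (Eventually.of_forall fun t => ?_)
  · refine Continuous.aestronglyMeasurable ?_
    refine (hu.comp (by fun_prop)).mul (continuous_ofReal.comp ?_)
    refine Continuous.inv₀ (by fun_prop) fun t => by positivity
  · rw [norm_mul, norm_real, Real.norm_eq_abs, abs_of_nonneg (by positivity)]
    gcongr
    exact hM _
  · refine Tendsto.mul_const _ ?_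
    have h : Tendsto (fun n : ℕ => (1 / ((n : ℝ) + 1)) • t + w) atTop (𝓝 ((0 : ℝ) • t + w)) :=
      (tendsto_one_div_add_atTop_nhds_zero_nat.smul_const t).add_const w
    rw [zero_smul, zero_add] at h
    exact (hu.tendsto w).comp h

end

section

open MeasureTheory Filter Topology

theorem kern_integrable {v : ℂ → ℂ} {M ρ : ℝ} (hvm : Measurable v) (hM : ∀ t, ‖v t‖ ≤ M)
    (hv0 : ∀ t, t ∉ ball (0 : ℂ) ρ → v t = 0) (s : ℝ) (w : ℂ) :
    Integrable fun t => v t * kern s (t - w) := by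
  refine ((inv_integrable_shift w ρ).const_mul M).mono' ?_
    (Eventually.of_forall fun t => bdd_le hM hv0 w t (norm_kern_le _ _))
  exact (hvm.mul ((kern_measurable _).comp (measurable_id.sub_const w))).aestronglyMeasurable

theorem Setup.repr {ζ₀ : ℂ} {r : ℝ} {p : Polynomial ℂ} {Ω : Set ℂ} {S Φ : ℂ → ℂ}
    (H : Setup ζ₀ r p Ω S Φ) {R : ℝ} (hR : 0 < R) (hRr : R < r) {η a : ℂ → ℂ}
    (hη : ContDiff ℝ 1 η) (hηc : HasCompactSupport η) (hηs : tsupport η ⊆ ball ζ₀ R)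
    (hd : ∀ t, HasDb η (a t) t) (hac : Continuous a) (ha0 : ∀ t, t ∉ tsupport η → a t = 0)
    (w : ℂ) :
    2 * (c0 * (η w * Φ w)) =
      2 * (∫ t, {t | Φ t ≠ 0}.indicator η t * p.eval t * (t - w)⁻¹)
        - ∫ t, a t * Φ t * (t - w)⁻¹ := by
  have hmE : MeasurableSet {t | Φ t ≠ 0} := H.isOpen_ne.measurableSet
  have hΦc : ∀ t ∈ tsupport η, ContinuousAt Φ t := fun t ht =>
    H.cont.continuousAt (isOpen_ball.mem_nhds (ball_subset_ball hRr.le (hηs ht)))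
  have hu : Continuous fun t => η t * Φ t := continuous_of_tsupport fun t ht =>
    hη.continuous.continuousAt.mul (hΦc t (tsupport_mul_subset_left ht))
  have huc : HasCompactSupport fun t => η t * Φ t := hηc.mul_right
  have has : tsupport a ⊆ tsupport η :=
    closure_minimal (fun t ht => by by_contra h; exact ht (ha0 t h)) (isClosed_tsupport _)
  have hacs : HasCompactSupport a := hηc.of_isClosed_subset (isClosed_tsupport _) has
  have hb : Continuous fun t => a t * Φ t := continuous_of_tsupport fun t ht =>
    hac.continuousAt.mul (hΦc t (has (tsupport_mul_subset_left ht)))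
  have hbc : HasCompactSupport fun t => a t * Φ t := hacs.mul_right
  have hq : Continuous fun t => η t * p.eval t := hη.continuous.mul p.continuous
  have hqc : HasCompactSupport fun t => η t * p.eval t := hηc.mul_right
  obtain ⟨M1, hM1⟩ := hu.bounded_above_of_compact_support huc
  obtain ⟨M2, hM2⟩ := hb.bounded_above_of_compact_support hbc
  obtain ⟨M3, hM3⟩ := hq.bounded_above_of_compact_support hqc
  have hout : ∀ t, t ∉ ball (0 : ℂ) (‖ζ₀‖ + R) → t ∉ tsupport η := by
    intro t ht h
    apply ht
    have := hηs h
    rw [mem_ball_zero_iff]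
    rw [mem_ball, dist_eq_norm] at this
    calc ‖t‖ = ‖ζ₀ + (t - ζ₀)‖ := by congr 1; ring
      _ ≤ ‖ζ₀‖ + ‖t - ζ₀‖ := norm_add_le _ _
      _ < _ := by linarith
  have hη0 : ∀ t, t ∉ tsupport η → η t = 0 := fun t ht => image_eq_zero_of_notMem_tsupport ht
  have vm1 : Measurable fun t => {t | Φ t ≠ 0}.indicator η t * p.eval t :=
    (hη.continuous.measurable.indicator hmE).mul p.continuous.measurable
  have hv1 : ∀ t, ‖{t | Φ t ≠ 0}.indicator η t * p.eval t‖ ≤ M3 := by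
    intro t
    by_cases h : t ∈ {t | Φ t ≠ 0}
    · rw [indicator_of_mem h]; exact hM3 t
    · rw [indicator_of_notMem h]; simpa using (norm_nonneg _).trans (hM3 t)
  have hz1 : ∀ t, t ∉ ball (0 : ℂ) (‖ζ₀‖ + R) → {t | Φ t ≠ 0}.indicator η t * p.eval t = 0 := by
    intro t ht
    by_cases h : t ∈ {t | Φ t ≠ 0}
    · rw [indicator_of_mem h, hη0 t (hout t ht), zero_mul]
    · rw [indicator_of_notMem h, zero_mul]
  have hz2 : ∀ t, t ∉ ball (0 : ℂ) (‖ζ₀‖ + R) → a t * Φ t = 0 := by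
    intro t ht
    rw [ha0 t (hout t ht), zero_mul]
  have L1 := kern_limit vm1 hv1 hz1 w
  have L2 := kern_limit hb.measurable hM2 hz2 w
  have L0 := approx_id hu hM1 w
  refine tendsto_nhds_unique (L0.const_mul 2) (((L1.const_mul 2).sub L2).congr fun n => ?_)
  have hs : (1 / ((n : ℝ) + 1)) ≠ 0 := (sn_pos n).ne'
  set s := 1 / ((n : ℝ) + 1)
  have hkc : ContDiff ℝ 1 fun t => kern s (t - w) := (kern_contDiff hs).comp (contDiff_id.sub contDiff_const)
  have W := H.weak hR hRr (ψ := fun t => η t * kern s (t - w)) (hη.mul hkc) hηc.mul_right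
    ((tsupport_mul_subset_left.trans hηs).trans ball_subset_closedBall)
    (fun t => (hd t).mul (kern_hasDb hs w t))
  have I1 := (kern_integrable vm1 hv1 hz1 s w).const_mul 2
  have I2 := kern_integrable hb.measurable hM2 hz2 s w
  have I0 : Integrable fun t => 2 * (η t * Φ t * ((s ^ 2 / (normSq (t - w) + s ^ 2) ^ 2 : ℝ) : ℂ)) := by
    refine Integrable.const_mul ?_ 2
    refine Continuous.integrable_of_hasCompactSupport (hu.mul (continuous_ofReal.comp ?_)) huc.mul_right
    refine Continuous.div (by fun_prop) ?_ fun t => ?_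
    · exact ((continuous_normSq.comp (continuous_id.sub continuous_const)).add continuous_const).pow 2
    · have := normSq_nonneg (t - w)
      positivity
  have E2 := integral_sub (I1.sub I2) I0
  simp only [Pi.sub_apply] at E2
  rw [← integral_const_mul, ← integral_const_mul, ← integral_sub I1 I2, ← sub_eq_zero,
    ← E2, ← neg_eq_zero, ← integral_neg]
  refine Eq.trans ?_ W
  congr 1
  ext t
  by_cases h : t ∈ {t | Φ t ≠ 0}
  · simp only [indicator_of_mem h]
    ring
  · have h' : Φ t = 0 := by simpa using h
    simp only [indicator_of_notMem h, h']
    ring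

theorem cauchy_poly {v : ℂ → ℂ} {M ρ : ℝ} (hvm : Measurable v) (hM : ∀ t, ‖v t‖ ≤ M)
    (hv0 : ∀ t, t ∉ ball (0 : ℂ) ρ → v t = 0) (p : Polynomial ℂ) :
    ∃ Q : Polynomial ℂ, ∀ w, Integrable (fun t => v t * p.eval t * (t - w)⁻¹) ∧
      ∫ t, v t * p.eval t * (t - w)⁻¹ = p.eval w * (∫ t, v t * (t - w)⁻¹) + Q.eval w := by
  have hM0 : 0 ≤ M := (norm_nonneg _).trans (hM 0)
  have hi : ∀ p : Polynomial ℂ, Integrable (fun t => v t * p.eval t) := by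
    intro p
    obtain ⟨K, hK⟩ := (isCompact_closedBall (0 : ℂ) ρ).exists_bound_of_continuousOn
      p.continuous.continuousOn
    refine Integrable.mono' (g := (ball (0 : ℂ) ρ).indicator fun _ => M * K) ?_
      (hvm.mul p.continuous.measurable).aestronglyMeasurable (Eventually.of_forall fun t => ?_)
    · exact (integrable_indicator_iff measurableSet_ball).2 (integrableOn_const measure_ball_lt_top.ne)
    · by_cases ht : t ∈ ball (0 : ℂ) ρ
      · rw [indicator_of_mem ht, norm_mul]
        gcongr
        · exact hM t
        · exact hK t (ball_subset_closedBall ht)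
      · rw [hv0 t ht, indicator_of_notMem ht]; simp
  have hmono : ∀ n : ℕ, ∃ Q : Polynomial ℂ, ∀ w, Integrable (fun t => v t * t ^ n * (t - w)⁻¹) ∧
      ∫ t, v t * t ^ n * (t - w)⁻¹ = w ^ n * (∫ t, v t * (t - w)⁻¹) + Q.eval w := by
    intro n
    induction n with
    | zero => exact ⟨0, fun w => by simpa using cauchy_integrable hvm hM hv0 w⟩
    | succ n ih =>
      obtain ⟨Q, hQ⟩ := ih
      refine ⟨Polynomial.C (∫ t, v t * t ^ n) + Polynomial.X * Q, fun w => ?_⟩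
      have hi' : Integrable (fun t => v t * t ^ n) := by simpa using hi (Polynomial.X ^ n)
      have hw := (hQ w).1.const_mul w
      have hae : (fun t => v t * t ^ n + w * (v t * t ^ n * (t - w)⁻¹)) =ᵐ[volume]
          fun t => v t * t ^ (n + 1) * (t - w)⁻¹ := by
        filter_upwards [compl_mem_ae_iff.2 (measure_singleton w)] with t ht
        have : t - w ≠ 0 := sub_ne_zero.2 ht
        field_simp
        ring
      refine ⟨(hi'.add hw).congr hae, ?_⟩
      rw [← integral_congr_ae hae, integral_add hi' hw, integral_const_mul, (hQ w).2]
      simp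
      ring
  induction p using Polynomial.induction_on' with
  | add p q hp hq =>
    obtain ⟨P, hP⟩ := hp
    obtain ⟨Q, hQ⟩ := hq
    refine ⟨P + Q, fun w => ?_⟩
    have e : (fun t => v t * (p + q).eval t * (t - w)⁻¹) = fun t =>
      v t * p.eval t * (t - w)⁻¹ + v t * q.eval t * (t - w)⁻¹ := by
      ext t; rw [Polynomial.eval_add]; ring
    rw [e]
    refine ⟨(hP w).1.add (hQ w).1, ?_⟩
    rw [integral_add (hP w).1 (hQ w).1, (hP w).2, (hQ w).2, Polynomial.eval_add, Polynomial.eval_add]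
    ring
  | monomial n c =>
    obtain ⟨Q, hQ⟩ := hmono n
    refine ⟨Polynomial.C c * Q, fun w => ?_⟩
    have e : (fun t => v t * (Polynomial.monomial n c).eval t * (t - w)⁻¹) = fun t =>
      c * (v t * t ^ n * (t - w)⁻¹) := by
      ext t; rw [Polynomial.eval_monomial]; ring
    rw [e]
    refine ⟨(hQ w).1.const_mul c, ?_⟩
    rw [integral_const_mul, (hQ w).2]
    simp
    ring

theorem cauchy_hol {g : ℂ → ℂ} (hg : Continuous g) (hgc : HasCompactSupport g) {ζ₀ : ℂ} {R : ℝ}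
    (hR : 0 < R) (h0 : ∀ t ∈ ball ζ₀ R, g t = 0) :
    DifferentiableOn ℂ (fun w => ∫ t, g t * (t - w)⁻¹) (ball ζ₀ (R / 2)) := by
  intro w₀ hw₀
  refine DifferentiableAt.differentiableWithinAt ?_
  have hgi : Integrable g := hg.integrable_of_hasCompactSupport hgc
  have hfar : ∀ t, t ∉ ball ζ₀ R → ∀ w ∈ ball ζ₀ (R / 2), R / 2 ≤ ‖t - w‖ := by
    intro t ht w hw
    rw [mem_ball, not_lt] at ht
    rw [mem_ball] at hw
    have := dist_triangle t w ζ₀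
    rw [← dist_eq_norm]
    linarith
  have hmeas : ∀ w, AEStronglyMeasurable (fun t => g t * (t - w)⁻¹) volume := fun w =>
    (hg.measurable.mul (measurable_id.sub_const w).inv).aestronglyMeasurable
  refine (hasDerivAt_integral_of_dominated_loc_of_deriv_le (μ := volume)
    (F := fun w t => g t * (t - w)⁻¹) (F' := fun w t => g t * ((t - w)⁻¹ ^ 2))
    (bound := fun t => ‖g t‖ * ((R / 2)⁻¹ ^ 2)) (isOpen_ball.mem_nhds hw₀)
    (Eventually.of_forall hmeas) ?_ ?_ (Eventually.of_forall fun t w hw => ?_)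
    (hgi.norm.mul_const _) (Eventually.of_forall fun t w hw => ?_)).2.differentiableAt
  · refine (hgi.norm.mul_const ((R / 2)⁻¹)).mono' (hmeas _) (Eventually.of_forall fun t => ?_)
    by_cases ht : t ∈ ball ζ₀ R
    · simp [h0 t ht]
    · rw [norm_mul, norm_inv]
      gcongr
      exact hfar t ht _ hw₀
  · exact (hg.measurable.mul ((measurable_id.sub_const w₀).inv.pow_const 2)).aestronglyMeasurable
  · by_cases ht : t ∈ ball ζ₀ R
    · simp [h0 t ht]
    · rw [norm_mul, norm_pow, norm_inv]
      gcongr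
      exact hfar t ht _ hw
  · by_cases ht : t ∈ ball ζ₀ R
    · simp only [h0 t ht, zero_mul]
      exact hasDerivAt_const _ _
    · have h := hfar t ht w hw
      have hne : t - w ≠ 0 := norm_pos_iff.1 (by linarith)
      have h1 : HasDerivAt (fun w => t - w) (-1) w := by
        simpa using (hasDerivAt_id w).const_sub t
      have h2 := (h1.inv hne).const_mul (g t)
      rw [neg_neg, one_div, ← inv_pow] at h2
      exact h2

end

section

open MeasureTheory Filter Topology

theorem eventually_eval_ne {p : Polynomial ℂ} (hp : p ≠ 0) (ζ₀ : ℂ) :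
    ∀ᶠ z in 𝓝 ζ₀, z ≠ ζ₀ → p.eval z ≠ 0 := by
  have hf : ((p.roots.toFinset : Set ℂ) \ {ζ₀}).Finite := p.roots.toFinset.finite_toSet.sdiff
  filter_upwards [hf.isClosed.isOpen_compl.mem_nhds (by simp : ζ₀ ∈ _)] with z hz hne h0
  exact hz ⟨by simp [hp, h0], hne⟩

theorem Setup.tendsto_zero {ζ₀ : ℂ} {r : ℝ} {p : Polynomial ℂ} {Ω : Set ℂ} {S Φ : ℂ → ℂ}
    (H : Setup ζ₀ r p Ω S Φ) (hr : 0 < r) (hp : p ≠ 0)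
    (hfr : ∃ᶠ z in 𝓝[≠] ζ₀, Φ z = 0) :
    Tendsto (fun z => Φ z / p.eval z) (𝓝[≠] ζ₀) (𝓝 0) := by
  obtain ⟨f, a, hf, hfc, hfs, hf0, hf1, hfone, hd, hac, ha0, ha1⟩ :=
    exists_bump ζ₀ (R := r / 4) (r := r / 2) (by linarith) (by linarith)
  set η : ℂ → ℂ := fun t => (f t : ℂ) with hη
  have hmE : MeasurableSet {t | Φ t ≠ 0} := H.isOpen_ne.measurableSet
  set v : ℂ → ℂ := {t | Φ t ≠ 0}.indicator η with hv
  have hvm : Measurable v := hf.continuous.measurable.indicator hmE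
  have hM : ∀ t, ‖v t‖ ≤ 1 := by
    intro t
    refine (norm_indicator_le_norm_self _ _).trans ?_
    rw [hη, norm_real, Real.norm_eq_abs, abs_of_nonneg (hf0 t)]
    exact hf1 t
  have hv0 : ∀ t, t ∉ ball (0 : ℂ) (‖ζ₀‖ + r / 2) → v t = 0 := by
    intro t ht
    have h : η t = 0 := by
      by_contra h
      apply ht
      have := hfs (subset_tsupport _ h)
      rw [mem_ball_zero_iff]
      rw [mem_ball, dist_eq_norm] at this
      calc ‖t‖ = ‖ζ₀ + (t - ζ₀)‖ := by congr 1; ring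
        _ ≤ ‖ζ₀‖ + ‖t - ζ₀‖ := norm_add_le _ _
        _ < _ := by linarith
    rw [hv, indicator_apply_eq_zero]
    exact fun _ => h
  obtain ⟨Q, hQ⟩ := cauchy_poly hvm hM hv0 p
  have hCc := cauchy_continuous hvm hM hv0
  set C : ℂ → ℂ := fun w => ∫ t, v t * (t - w)⁻¹ with hC
  have has : tsupport a ⊆ tsupport η :=
    closure_minimal (fun t ht => by by_contra h; exact ht (ha0 t h)) (isClosed_tsupport _)
  have hacs : HasCompactSupport a := hfc.of_isClosed_subset (isClosed_tsupport _) has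
  have hb : Continuous fun t => a t * Φ t := continuous_of_tsupport fun t ht =>
    hac.continuousAt.mul (H.cont.continuousAt (isOpen_ball.mem_nhds
      (ball_subset_ball (by linarith) (hfs (has (tsupport_mul_subset_left ht))))))
  have hA := cauchy_hol hb hacs.mul_right (ζ₀ := ζ₀) (R := r / 4) (by linarith)
    (fun t ht => by rw [ha1 t ht, zero_mul])
  have hmemb : ball ζ₀ (r / 4 / 2) ∈ 𝓝 ζ₀ := ball_mem_nhds _ (by linarith)
  have hAan := hA.analyticAt hmemb
  set A : ℂ → ℂ := fun w => ∫ t, a t * Φ t * (t - w)⁻¹ with hAdef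
  have hQan : AnalyticAt ℂ (fun w => Q.eval w) ζ₀ := Q.differentiable.analyticAt ζ₀
  have hpan : AnalyticAt ℂ (fun w => p.eval w) ζ₀ := p.differentiable.analyticAt ζ₀
  set g : ℂ → ℂ := (fun w => 2 * Q.eval w - A w) / fun w => p.eval w with hg
  have hmer : MeromorphicAt g ζ₀ :=
    ((analyticAt_const.mul hQan).sub hAan).meromorphicAt.div hpan.meromorphicAt
  have hc0 : (c0 : ℂ) ≠ 0 := by exact_mod_cast c0_pos.ne'
  have hform : ∀ᶠ w in 𝓝[≠] ζ₀, Φ w / p.eval w = (2 * (c0 : ℂ))⁻¹ * (2 * C w + g w) := by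
    have h1 := mem_nhdsWithin_of_mem_nhds (t := {ζ₀}ᶜ) hmemb
    have h2 := mem_nhdsWithin_of_mem_nhds (t := {ζ₀}ᶜ) (eventually_eval_ne hp ζ₀)
    filter_upwards [h1, h2, self_mem_nhdsWithin] with w hw hpw hne
    have hpw' : p.eval w ≠ 0 := hpw hne
    have hR := H.repr (R := r / 2) (by linarith) (by linarith) hf hfc hfs hd hac ha0 w
    have h1 : f w = 1 := hfone w (ball_subset_closedBall (ball_subset_ball (by linarith) hw))
    have e : 2 * ((c0 : ℂ) * Φ w) = 2 * (p.eval w * C w + Q.eval w) - A w := by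
      rw [← (hQ w).2, hAdef, ← hR]
      simp [hη, h1]
    simp only [hg, Pi.div_apply]
    field_simp
    linear_combination e
  have hord : 0 ≤ meromorphicOrderAt g ζ₀ := by
    by_contra hneg
    have hcob := tendsto_cobounded_of_meromorphicOrderAt_neg (not_le.1 hneg)
    have h1 := (tendsto_norm_cobounded_atTop.comp hcob).eventually_gt_atTop (2 * (‖C ζ₀‖ + 1))
    have h2 : ∀ᶠ w in 𝓝[≠] ζ₀, ‖C w‖ < ‖C ζ₀‖ + 1 :=
      (hCc.norm.continuousAt.eventually_lt_const (by simp)).filter_mono nhdsWithin_le_nhds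
    obtain ⟨w, hw0, hw1, hw2, hw3⟩ := (hfr.and_eventually (h1.and (h2.and hform))).exists
    rw [hw0, zero_div] at hw3
    have h4 : 2 * C w + g w = 0 := by
      rcases mul_eq_zero.1 hw3.symm with h | h
      · exact absurd h (by simp [hc0])
      · exact h
    have h5 : g w = -(2 * C w) := by linear_combination h4
    simp only [Function.comp, h5, norm_neg, norm_mul, Complex.norm_ofNat] at hw1
    linarith
  obtain ⟨c, hc⟩ := tendsto_nhds_of_meromorphicOrderAt_nonneg hmer hord
  have hlim : Tendsto (fun z => Φ z / p.eval z) (𝓝[≠] ζ₀)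
      (𝓝 ((2 * (c0 : ℂ))⁻¹ * (2 * C ζ₀ + c))) := by
    have h : Tendsto C (𝓝[≠] ζ₀) (𝓝 (C ζ₀)) := hCc.continuousAt.mono_left nhdsWithin_le_nhds
    refine (((h.const_mul 2).add hc).const_mul _).congr' ?_
    filter_upwards [hform] with w hw using hw.symm
  set l := (2 * (c0 : ℂ))⁻¹ * (2 * C ζ₀ + c)
  have hl : l = 0 := by
    by_contra hl
    have := hlim.eventually_ne hl
    obtain ⟨w, hw0, hw1⟩ := (hfr.and_eventually this).exists
    rw [hw0, zero_div] at hw1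
    exact hw1 rfl
  rwa [hl] at hlim

end

/-- If `S(ζ) = conj ζ · p(ζ)` on `Γ` for a polynomial `p`, then
`f = S/p` (with `f(ζ₀) = conj ζ₀`) is a Schwarz function near `ζ₀`. -/
theorem stmt_2 (ζ₀ : ℂ) (hζ₀ne : ζ₀ ≠ 0) (r : ℝ) (hr : 0 < r) (p : Polynomial ℂ)
    (hp : p ≠ 0)
    (Ω : Set ℂ) (hΩopen : IsOpen Ω) (hΩsub : Ω ⊆ ball ζ₀ r)
    (hΩbdd : Bornology.IsBounded Ω)
    (hζ₀mem : ζ₀ ∈ frontier Ω)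
    (hacc : ζ₀ ∈ closure ((frontier Ω ∩ ball ζ₀ r) \ {ζ₀}))
    (S : ℂ → ℂ)
    (hShol : DifferentiableOn ℂ S Ω)
    (hScont : ContinuousOn S (Ω ∪ (frontier Ω ∩ ball ζ₀ r)))
    (hSbdd : ∃ M : ℝ, ∀ z ∈ Ω ∪ (frontier Ω ∩ ball ζ₀ r), ‖S z‖ ≤ M)
    (hSbdry : ∀ ζ ∈ frontier Ω ∩ ball ζ₀ r, S ζ = conj' ζ * p.eval ζ) :
    ∃ r' > 0, r' ≤ r ∧ (∀ z ∈ closedBall ζ₀ r' \ {ζ₀}, p.eval z ≠ 0) ∧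
      DifferentiableOn ℂ (fun z => if z = ζ₀ then conj' ζ₀ else S z / p.eval z)
        (Ω ∩ ball ζ₀ r') ∧
      ContinuousOn (fun z => if z = ζ₀ then conj' ζ₀ else S z / p.eval z)
        ((Ω ∪ (frontier Ω ∩ ball ζ₀ r)) ∩ ball ζ₀ r') ∧
      ∀ ζ ∈ (frontier Ω ∩ ball ζ₀ r) ∩ ball ζ₀ r',
        (if ζ = ζ₀ then conj' ζ₀ else S ζ / p.eval ζ) = conj' ζ := by
  classical
  have hζΩ : ζ₀ ∉ Ω := by
    intro h
    rw [hΩopen.frontier_eq] at hζ₀mem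
    exact hζ₀mem.2 h
  have hfrΩ : ∀ z ∈ frontier Ω, z ∉ Ω := by
    intro z hz h
    rw [hΩopen.frontier_eq] at hz
    exact hz.2 h
  let Φ : ℂ → ℂ := fun z => if z ∈ Ω then S z - conj' z * p.eval z else 0
  have hcl : ∀ z, z ∈ ball ζ₀ r → z ∈ closure Ω → z ∈ Ω ∪ (frontier Ω ∩ ball ζ₀ r) := by
    intro z hz hc
    by_cases h : z ∈ Ω
    · exact Or.inl h
    · exact Or.inr ⟨by rw [hΩopen.frontier_eq]; exact ⟨hc, h⟩, hz⟩
  have hT : ContinuousOn (fun z => S z - conj' z * p.eval z) (Ω ∪ (frontier Ω ∩ ball ζ₀ r)) :=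
    hScont.sub (continuous_conj.mul p.continuous).continuousOn
  have hT0 : ∀ z ∈ Ω ∪ (frontier Ω ∩ ball ζ₀ r), Φ z = S z - conj' z * p.eval z := by
    rintro z (hz | hz)
    · simp only [Φ, if_pos hz]
    · simp only [Φ, if_neg (hfrΩ z hz.1), hSbdry z hz, sub_self]
  have hΦ1 : ContinuousOn Φ (Ω ∪ (frontier Ω ∩ ball ζ₀ r)) := hT.congr hT0
  have hΦc : ContinuousOn Φ (ball ζ₀ r) := by
    intro z hz
    by_cases hzc : z ∈ closure Ω
    · have h1 := hΦ1 z (hcl z hz hzc)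
      have h2 : ContinuousWithinAt Φ (ball ζ₀ r \ (Ω ∪ (frontier Ω ∩ ball ζ₀ r)) ∪
          (Ω ∪ (frontier Ω ∩ ball ζ₀ r))) z := by
        refine ContinuousWithinAt.union ?_ h1
        by_cases hzΩ : z ∈ Ω
        · have : (ball ζ₀ r \ (Ω ∪ (frontier Ω ∩ ball ζ₀ r))) ⊆ Ωᶜ := fun y hy h => hy.2 (Or.inl h)
          refine ContinuousAt.continuousWithinAt ?_
          exact h1.continuousAt (Filter.mem_of_superset (hΩopen.mem_nhds hzΩ) subset_union_left)
        · have h0 : Φ z = 0 := by simp only [Φ, if_neg hzΩ]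
          refine (continuousWithinAt_const (b := (0 : ℂ))).congr (fun y hy => ?_) h0
          have : y ∉ Ω := fun h => hy.2 (Or.inl h)
          simp only [Φ, if_neg this]
      exact h2.mono (fun y hy => by
        by_cases h : y ∈ Ω ∪ (frontier Ω ∩ ball ζ₀ r)
        · exact Or.inr h
        · exact Or.inl ⟨hy, h⟩)
    · refine ContinuousAt.continuousWithinAt ?_
      refine (continuousAt_const (y := (0 : ℂ))).congr ?_
      filter_upwards [isClosed_closure.isOpen_compl.mem_nhds hzc] with y hy
      have : y ∉ Ω := fun h => hy (subset_closure h)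
      simp only [Φ, if_neg this]
  have H : Setup ζ₀ r p Ω S Φ :=
    ⟨hΩopen, hΩsub, hShol, fun z hz => by simp only [Φ, if_pos hz],
      fun z hz => by simp only [Φ, if_neg hz], hΦc⟩
  have hfr : ∃ᶠ z in nhdsWithin ζ₀ {ζ₀}ᶜ, Φ z = 0 := by
    have h1 := mem_closure_iff_frequently.1 hacc
    rw [frequently_nhdsWithin_iff]
    refine h1.mono fun z hz => ⟨?_, hz.2⟩
    simp only [Φ, if_neg (hfrΩ z hz.1.1)]
  have hlim := H.tendsto_zero hr hp hfr
  obtain ⟨δ, hδ, hδp⟩ := Metric.eventually_nhds_iff.1 (eventually_eval_ne hp ζ₀)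
  have hr'δ : min (δ / 2) r < δ := (min_le_left _ _).trans_lt (by linarith)
  have hpne : ∀ z ∈ closedBall ζ₀ (min (δ / 2) r) \ {ζ₀}, p.eval z ≠ 0 := fun z hz =>
    hδp (lt_of_le_of_lt hz.1 hr'δ) hz.2
  refine ⟨min (δ / 2) r, lt_min (by linarith) hr, min_le_right _ _, hpne, ?_, ?_, ?_⟩
  · have hd : DifferentiableOn ℂ (fun z => S z / p.eval z) (Ω ∩ ball ζ₀ (min (δ / 2) r)) :=
      (hShol.mono inter_subset_left).div p.differentiable.differentiableOn fun z hz =>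
        hpne z ⟨ball_subset_closedBall hz.2, fun h => hζΩ (h ▸ hz.1)⟩
    refine hd.congr fun z hz => ?_
    rw [if_neg]
    rintro rfl
    exact hζΩ hz.1
  · intro z hz
    by_cases hzz : z = ζ₀
    · subst hzz
      -- the value at the centre
      have h1 : Filter.Tendsto (fun w => conj' w + Φ w / p.eval w) (nhdsWithin z {z}ᶜ)
          (nhds (conj' z + 0)) :=
        (continuous_conj.continuousAt.mono_left nhdsWithin_le_nhds).add hlim
      rw [add_zero] at h1
      rw [← continuousWithinAt_sdiff_self]
      unfold ContinuousWithinAt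
      beta_reduce
      rw [if_pos rfl]
      refine (h1.mono_left (nhdsWithin_mono _ fun w hw => hw.2)).congr' ?_
      filter_upwards [self_mem_nhdsWithin] with w hw
      have hpw := hpne w ⟨ball_subset_closedBall hw.1.2, hw.2⟩
      rw [if_neg (show ¬ w = z from hw.2), hT0 w hw.1.1]
      field_simp
      ring
    · have h1 : ContinuousWithinAt (fun z => S z / p.eval z)
          ((Ω ∪ (frontier Ω ∩ ball ζ₀ r)) ∩ ball ζ₀ (min (δ / 2) r)) z :=
        ((hScont z hz.1).mono inter_subset_left).div p.continuous.continuousWithinAt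
          (hpne z ⟨ball_subset_closedBall hz.2, hzz⟩)
      refine h1.congr_of_eventuallyEq ?_ (by rw [if_neg hzz])
      filter_upwards [mem_nhdsWithin_of_mem_nhds (isOpen_ne.mem_nhds hzz)] with y hy
      rw [if_neg hy]
  · intro ζ hζ
    by_cases h : ζ = ζ₀
    · rw [if_pos h, h]
    · rw [if_neg h, hSbdry ζ hζ.1,
        mul_div_cancel_right₀ _ (hpne ζ ⟨ball_subset_closedBall hζ.2, h⟩)]
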